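/- If S is a weakly infinite dimensional subset of the separable Hilbert space ℓ², then the complement ℓ² \ S is continuum connected: any two points of ℓ² \ S are contained in a compact connected subset of ℓ² \ S. -/

import Mathlib

open Set

/-- A separator between `A` and `B` in a topological space: a closed set `L` whose
complement is the union of two disjoint open sets containing `A` and `B` respectively. -/
def IsSeparator {X : Type*} [TopologicalSpace X] (A B L : Set X) : Prop :=
  IsClosed L ∧ ∃ U V : Set X, IsOpen U ∧ IsOpen V ∧ Disjoint U V ∧
    A ⊆ U ∧ B ⊆ V ∧ Lᶜ = U ∪ V

/-- A family of pairs of sets is essential if every choice of separators has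
nonempty intersection. -/
def IsEssentialFamily {X : Type*} [TopologicalSpace X] {Γ : Type*}
    (A B : Γ → Set X) : Prop :=
  ∀ L : Γ → Set X, (∀ i, IsSeparator (A i) (B i) (L i)) → (⋂ i, L i).Nonempty

/-- A space is strongly infinite dimensional if it admits a countably infinite
essential family of pairs of disjoint closed subsets. -/
def StronglyInfiniteDimensional (X : Type*) [TopologicalSpace X] : Prop :=
  ∃ A B : ℕ → Set X,
    (∀ n, IsClosed (A n) ∧ IsClosed (B n) ∧ Disjoint (A n) (B n)) ∧
    IsEssentialFamily A B

/-- The separable Hilbert space `ℓ²` of square-summable real sequences. -/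
abbrev EllTwo : Type := lp (fun _ : ℕ => ℝ) 2


namespace Cub
open Finset

def skip (m j : ℕ) : ℕ := if j < m then j else j + 1

variable {V : Type*}

def P (L : ℕ → V → ZMod 2) (i : ℕ) (p : ℕ → V) : ZMod 2 :=
  ∏ j ∈ range i, (L j (p (j+1)) + L j (p j))

lemma P_congr (L : ℕ → V → ZMod 2) (i : ℕ) (p p' : ℕ → V) (h : ∀ a ≤ i, p a = p' a) :
    P L i p = P L i p' := by
  unfold P
  refine prod_congr rfl fun j hj => ?_
  have := mem_range.1 hj
  rw [h j (by omega), h (j+1) (by omega)]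

lemma P_succ (L : ℕ → V → ZMod 2) (i : ℕ) (p : ℕ → V) :
    P L (i+1) p = P L i p * (L i (p (i+1)) + L i (p i)) := by
  unfold P; rw [prod_range_succ]

lemma skip_lt {m j : ℕ} (h : j < m) : skip m j = j := by simp [skip, h]
lemma skip_ge {m j : ℕ} (h : m ≤ j) : skip m j = j + 1 := by simp [skip, h]

lemma sum_P (L : ℕ → V → ZMod 2) (i : ℕ) (p : ℕ → V) :
    ∑ m ∈ range (i+1), P L i (fun a => p (skip m a)) = P L i p := by
  induction i with
  | zero => simp [P]
  | succ i ih =>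
    rw [sum_range_succ]
    have h1 : ∑ m ∈ range (i+1), P L (i+1) (fun a => p (skip m a)) =
        (∑ m ∈ range (i+1), P L i (fun a => p (skip m a))) * (L i (p (i+2)) + L i (p (i+1))) := by
      rw [sum_mul]
      refine sum_congr rfl fun m hm => ?_
      have := mem_range.1 hm
      rw [P_succ, skip_ge (by omega : m ≤ i+1), skip_ge (by omega : m ≤ i)]
    rw [h1, ih, P_succ, P_succ, skip_ge (le_refl _), skip_lt (by omega : i < i+1),
      P_congr L i (fun a => p (skip (i+1) a)) p (fun a ha => by rw [skip_lt (by omega)])]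
    generalize P L i p = A
    generalize L i (p (i+2)) = b
    generalize L i (p (i+1)) = c
    generalize L i (p i) = d
    revert A b c d; decide

def G (L : ℕ → V → ZMod 2) (g : V → ZMod 2) (i q : ℕ) (p : ℕ → V) : ZMod 2 :=
  P L i p * g (p i) * ∏ j ∈ Ico (i+1) q, (L j (p j) + L j (p (j-1)))

lemma G_congr (L : ℕ → V → ZMod 2) (g : V → ZMod 2) (i q : ℕ) (hi : i < q) (p p' : ℕ → V)
    (h : ∀ a < q, p a = p' a) :
    G L g i q p = G L g i q p' := by
  unfold G
  rw [P_congr L i p p' (fun a ha => h a (by omega)), h i hi]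
  congr 1
  refine prod_congr rfl fun j hj => ?_
  have := mem_Ico.1 hj
  rw [h j (by omega), h (j-1) (by omega)]

lemma G_succ (L : ℕ → V → ZMod 2) (g : V → ZMod 2) (i q : ℕ) (hi : i < q) (p : ℕ → V) :
    G L g i (q+1) p = G L g i q p * (L q (p q) + L q (p (q-1))) := by
  unfold G; rw [prod_Ico_succ_top (by omega)]; ring

lemma sum_G (L : ℕ → V → ZMod 2) (g : V → ZMod 2) (i q : ℕ) (hi : i < q) (p : ℕ → V) :
    ∑ m ∈ range (q+1), G L g i q (fun a => p (skip m a)) =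
      P L i p * (g (p (i+1)) + g (p i)) * ∏ j ∈ Ico (i+1) q, (L j (p (j+1)) + L j (p j)) := by
  induction q, hi using Nat.le_induction with
  | base =>
    rw [sum_range_succ]
    have h1 : ∑ m ∈ range (i+1), G L g i (i+1) (fun a => p (skip m a)) =
        (∑ m ∈ range (i+1), P L i (fun a => p (skip m a))) * g (p (i+1)) := by
      rw [sum_mul]
      refine sum_congr rfl fun m hm => ?_
      have := mem_range.1 hm
      simp only [G]
      rw [skip_ge (by omega : m ≤ i)]; simp
    rw [h1, sum_P]
    simp only [G]
    rw [skip_lt (by omega : i < i+1),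
      P_congr L i (fun a => p (skip (i+1) a)) p (fun a ha => by rw [skip_lt (by omega)])]
    simp; ring
  | succ q hq ih =>
    have hq' : i < q := hq
    rw [sum_range_succ] at ih
    rw [sum_range_succ, sum_range_succ]
    have h1 : ∑ m ∈ range q, G L g i (q+1) (fun a => p (skip m a)) =
        (∑ m ∈ range q, G L g i q (fun a => p (skip m a))) * (L q (p (q+1)) + L q (p q)) := by
      rw [sum_mul]
      refine sum_congr rfl fun m hm => ?_
      have := mem_range.1 hm
      rw [G_succ _ _ _ _ hq', skip_ge (by omega : m ≤ q), skip_ge (by omega : m ≤ q-1),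
        Nat.sub_add_cancel (by omega : 1 ≤ q)]
    rw [prod_Ico_succ_top (by omega), ← mul_assoc, ← ih, h1, G_succ _ _ _ _ hq', G_succ _ _ _ _ hq',
      skip_ge (le_refl q), skip_lt (by omega : q - 1 < q), skip_lt (by omega : q < q + 1),
      skip_lt (by omega : q - 1 < q + 1),
      G_congr L g i q hq' (fun a => p (skip (q+1) a)) p (fun a ha => by rw [skip_lt (by omega)]),
      G_congr L g i q hq' (fun a => p (skip q a)) p (fun a ha => by rw [skip_lt (by omega)])]
    generalize (∑ m ∈ range q, G L g i q (fun a => p (skip m a))) = S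
    generalize G L g i q p = A
    generalize L q (p (q+1)) = b
    generalize L q (p (q-1)) = c
    generalize L q (p q) = d
    revert S A b c d; decide

def path {n : ℕ} (v : Fin n → ℕ) (τ : Equiv.Perm (Fin n)) (m : ℕ) : Fin n → ℕ :=
  fun j => v j + if (τ j : ℕ) < m then 1 else 0

def box (n k : ℕ) : Finset (Fin n → ℕ) := Fintype.piFinset (fun _ => range k)

lemma mem_box {n k : ℕ} {v : Fin n → ℕ} : v ∈ box n k ↔ ∀ j, v j < k := by
  simp [box]

lemma stokes_mid {n : ℕ} (c : (ℕ → (Fin n → ℕ)) → ZMod 2)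
    (m : ℕ) (h0 : 0 < m) (hm : m < n) (v : Fin n → ℕ) :
    ∑ τ : Equiv.Perm (Fin n), c (fun a => path v τ (skip m a)) = 0 := by
  refine sum_involution (fun τ _ => τ.trans (Equiv.swap (⟨m-1, by omega⟩ : Fin n) ⟨m, hm⟩)) ?_ ?_ ?_ ?_
  · intro τ _
    have : (fun a => path v (τ.trans (Equiv.swap (⟨m-1, by omega⟩ : Fin n) ⟨m, hm⟩)) (skip m a))
        = (fun a => path v τ (skip m a)) := by
      funext a j
      have hs : skip m a ≠ m := by unfold skip; split_ifs <;> omega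
      have hiff : ((Equiv.swap (⟨m-1, by omega⟩ : Fin n) ⟨m, hm⟩ (τ j) : Fin n) : ℕ) < skip m a ↔
          (τ j : ℕ) < skip m a := by
        generalize skip m a = s at hs
        rcases eq_or_ne (τ j) ⟨m-1, by omega⟩ with h | h
        · rw [h, Equiv.swap_apply_left]; simp only; omega
        · rcases eq_or_ne (τ j) ⟨m, hm⟩ with h' | h'
          · rw [h', Equiv.swap_apply_right]; simp only; omega
          · rw [Equiv.swap_apply_of_ne_of_ne h h']
      simp only [path, Equiv.trans_apply, hiff]
    rw [this]
    exact CharTwo.add_self_eq_zero _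
  · intro τ _ _ h
    have := congrArg (fun e : Equiv.Perm (Fin n) => e (τ.symm ⟨m, hm⟩)) h
    simp at this
    omega
  · simp
  · intro τ _
    ext j; simp

lemma stokes_ends {N k : ℕ} (c : (ℕ → (Fin (N+1) → ℕ)) → ZMod 2)
    (hc : ∀ p p', (∀ a < N+1, p a = p' a) → c p = c p')
    (hz : ∀ r p, (∀ a < N+1, p a r = 0) → c p = 0)
    (hk : ∀ r p, (∀ a < N+1, p a r = k) → c p = 0) :
    ∑ x ∈ box (N+1) k ×ˢ (univ : Finset (Equiv.Perm (Fin (N+1)))),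
      c (fun a => path x.1 x.2 (skip 0 a)) =
    ∑ x ∈ box (N+1) k ×ˢ (univ : Finset (Equiv.Perm (Fin (N+1)))),
      c (fun a => path x.1 x.2 (skip (N+1) a)) := by
  have hrot : ∀ i : Fin (N+1), i ≠ 0 → (((finRotate (N+1)).symm i : Fin (N+1)) : ℕ) + 1 = i := by
    intro i hi
    obtain ⟨j, rfl⟩ := (finRotate (N+1)).surjective i
    rw [Equiv.symm_apply_apply]
    rcases eq_or_ne j (Fin.last N) with h | h
    · subst h; simp at hi
    · rw [coe_finRotate_of_ne_last h]
  have hrot0 : (finRotate (N+1)).symm 0 = Fin.last N := by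
    rw [Equiv.symm_apply_eq]; simp
  have key : ∀ (v : Fin (N+1) → ℕ) (τ : Equiv.Perm (Fin (N+1))),
     c (fun a => path v τ (skip 0 a)) = c (fun a =>
       path (Function.update v (τ.symm 0) (v (τ.symm 0) + 1)) (τ.trans (finRotate (N+1)).symm)
        (skip (N+1) a)) := by
    intro v τ
    apply hc
    intro a ha
    rw [skip_ge (Nat.zero_le _), skip_lt ha]
    funext j
    simp only [path, Equiv.trans_apply]
    rcases eq_or_ne j (τ.symm 0) with h | h
    · subst h
      simp [hrot0]; omega
    · rw [Function.update_of_ne h]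
      have h' : τ j ≠ 0 := fun h2 => h (by rw [← h2]; simp)
      have := hrot _ h'
      congr 2; apply propext; omega
  refine sum_bij_ne_zero (fun x _ _ => (Function.update x.1 (x.2.symm 0) (x.1 (x.2.symm 0) + 1),
    x.2.trans (finRotate (N+1)).symm)) ?_ ?_ ?_ ?_
  · rintro ⟨v, τ⟩ hx hne
    simp only [mem_product, Finset.mem_univ, and_true, mem_box] at hx ⊢
    intro j
    rcases eq_or_ne j (τ.symm 0) with h | h
    · subst h
      simp only [Function.update_self]
      by_contra hcon
      apply hne
      apply hk (τ.symm 0)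
      intro a ha
      have := hx (τ.symm 0)
      simp [path, skip]; omega
    · rw [Function.update_of_ne h]; exact hx j
  · rintro ⟨v, τ⟩ hx hne ⟨v', τ'⟩ hx' hne' h
    simp only [Prod.mk.injEq] at h
    obtain ⟨h1, h2⟩ := h
    have h3 : τ = τ' := by
      ext j
      have := congrArg (fun e : Equiv.Perm (Fin (N+1)) => (finRotate (N+1)) (e j)) h2
      simp only [Equiv.trans_apply, Equiv.apply_symm_apply] at this
      rw [this]
    subst h3
    have : v = v' := by
      funext j
      have := congrFun h1 j
      rcases eq_or_ne j (τ.symm 0) with h | h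
      · subst h; simpa using this
      · simpa [Function.update_of_ne h] using this
    rw [this]
  · rintro ⟨w, ρ⟩ hx hne
    simp only [mem_product, Finset.mem_univ, and_true, mem_box] at hx
    set r := ρ.symm (Fin.last N) with hr
    have hw : w r ≠ 0 := by
      intro h
      apply hne
      apply hz r
      intro a ha
      simp [path, skip_lt ha, hr]
      refine ⟨h, by omega⟩
    set τ := ρ.trans (finRotate (N+1)) with hτ
    have hτ0 : τ.symm 0 = r := by
      rw [Equiv.symm_apply_eq]; simp [hτ, hr]
    have e1 : Function.update (Function.update w r (w r - 1)) (τ.symm 0) (Function.update w r (w r - 1) (τ.symm 0) + 1) = w := by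
      rw [hτ0]; simp; rw [Nat.sub_add_cancel (by omega)]; try simp
    have e2 : τ.trans (finRotate (N+1)).symm = ρ := by ext; simp [hτ]
    refine ⟨(Function.update w r (w r - 1), τ), ?_, ?_, ?_⟩
    · simp only [mem_product, Finset.mem_univ, and_true, mem_box]
      intro j
      rcases eq_or_ne j r with h | h
      · rw [h]; simp; have := hx r; omega
      · rw [Function.update_of_ne h]; exact hx j
    · simp only; rw [key, e1, e2]; exact hne
    · simp only [e1, e2]
  · rintro ⟨v, τ⟩ hx hne
    exact key v τ

lemma stokes {N k : ℕ} (c : (ℕ → (Fin (N+1) → ℕ)) → ZMod 2)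
    (hc : ∀ p p', (∀ a < N+1, p a = p' a) → c p = c p')
    (hz : ∀ r p, (∀ a < N+1, p a r = 0) → c p = 0)
    (hk : ∀ r p, (∀ a < N+1, p a r = k) → c p = 0) :
    ∑ v ∈ box (N+1) k, ∑ τ : Equiv.Perm (Fin (N+1)), ∑ m ∈ range (N+1+1),
      c (fun a => path v τ (skip m a)) = 0 := by
  have h1 := stokes_ends (k := k) c hc hz hk
  rw [sum_product, sum_product] at h1
  simp_rw [sum_range_succ _ (N+1), sum_range_succ' _ N, sum_add_distrib]
  rw [h1]
  have : ∑ v ∈ box (N+1) k, ∑ τ : Equiv.Perm (Fin (N+1)), ∑ m ∈ range N,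
      c (fun a => path v τ (skip (m+1) a)) = 0 := by
    refine sum_eq_zero fun v _ => ?_
    rw [sum_comm]
    refine sum_eq_zero fun m hm => ?_
    have := mem_range.1 hm
    exact stokes_mid c (m+1) (by omega) (by omega) v
  rw [this, zero_add]
  exact CharTwo.add_self_eq_zero _

def BC {n : ℕ} (k : ℕ) (L : ℕ → (Fin n → ℕ) → ZMod 2) : Prop :=
  ∀ r : Fin n, ∀ x : Fin n → ℕ, (x r = 0 → L r x = 0) ∧ (x r = k → L r x = 1)

def M {n : ℕ} (k : ℕ) (L : ℕ → (Fin n → ℕ) → ZMod 2) : ZMod 2 :=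
  ∑ v ∈ box n k, ∑ τ : Equiv.Perm (Fin n), P L n (path v τ)

lemma P_split (L : ℕ → V → ZMod 2) (i n : ℕ) (hi : i < n) (p : ℕ → V) :
    P L n p = P L i p * (L i (p (i+1)) + L i (p i)) *
      ∏ j ∈ Ico (i+1) n, (L j (p (j+1)) + L j (p j)) := by
  unfold P
  rw [← prod_range_mul_prod_Ico _ (by omega : i+1 ≤ n), prod_range_succ]

lemma M_update {N k : ℕ} (L : ℕ → (Fin (N+1) → ℕ) → ZMod 2) (hL : BC k L)
    (i : ℕ) (hi : i < N+1) (h : (Fin (N+1) → ℕ) → ZMod 2) (hL' : BC k (Function.update L i h)) :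
    M k (Function.update L i h) = M k L := by
  set g : (Fin (N+1) → ℕ) → ZMod 2 := fun x => h x + L i x with hg
  have hfac : ∀ (r : Fin (N+1)) (e : ZMod 2) (p : ℕ → Fin (N+1) → ℕ),
      (∀ a < N+1, L r (p a) = e) → (∀ a < N+1, (r : ℕ) = i → g (p a) = 0) →
      G L g i (N+1) p = 0 := by
    intro r e p h1 h2
    unfold G P
    rcases lt_trichotomy (r : ℕ) i with hr | hr | hr
    · rw [prod_eq_zero (mem_range.2 hr), zero_mul, zero_mul]
      rw [h1 _ (by omega), h1 _ (by omega)]; exact CharTwo.add_self_eq_zero _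
    · rw [h2 i hi hr]; simp
    · rw [prod_eq_zero (i := (r:ℕ)) (mem_Ico.2 ⟨by omega, r.2⟩), mul_zero]
      rw [h1 _ (by omega), h1 _ (by omega)]; exact CharTwo.add_self_eq_zero _
  have hst := stokes (k := k) (G L g i (N+1)) (fun p p' hp => G_congr L g i (N+1) hi p p' hp)
    (by
      intro r p hp
      refine hfac r 0 p (fun a ha => (hL r _).1 (hp a ha)) ?_
      intro a ha hri
      have e1 := (hL r _).1 (hp a ha)
      have e2 := (hL' r _).1 (hp a ha)
      rw [hri] at e1 e2
      simp at e2
      simp [hg, e1, e2])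
    (by
      intro r p hp
      refine hfac r 1 p (fun a ha => (hL r _).2 (hp a ha)) ?_
      intro a ha hri
      have e1 := (hL r _).2 (hp a ha)
      have e2 := (hL' r _).2 (hp a ha)
      rw [hri] at e1 e2
      simp at e2
      simp [hg, e1, e2]; decide)
  simp_rw [sum_G L g i (N+1) hi] at hst
  have : M k (Function.update L i h) + M k L = 0 := by
    rw [← hst]; unfold M
    rw [← sum_add_distrib]
    refine sum_congr rfl fun v _ => ?_
    rw [← sum_add_distrib]
    refine sum_congr rfl fun τ _ => ?_
    rw [P_split _ i _ hi, P_split L i _ hi]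
    have e1 : P (Function.update L i h) i (path v τ) = P L i (path v τ) := by
      unfold P
      refine prod_congr rfl fun j hj => ?_
      rw [Function.update_of_ne (by have := mem_range.1 hj; omega)]
    have e2 : ∏ j ∈ Ico (i+1) (N+1), (Function.update L i h j (path v τ (j+1)) + Function.update L i h j (path v τ j))
      = ∏ j ∈ Ico (i+1) (N+1), (L j (path v τ (j+1)) + L j (path v τ j)) := by
      refine prod_congr rfl fun j hj => ?_
      rw [Function.update_of_ne (by have := mem_Ico.1 hj; omega)]
    rw [e1, e2]; simp [hg]; ring
  exact CharTwo.add_eq_zero.1 this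

def std (n : ℕ) (j : ℕ) (x : Fin n → ℕ) : ZMod 2 :=
  if h : j < n then (if x ⟨j, h⟩ = 0 then 0 else 1) else 0

lemma M_std {n k : ℕ} (hk : 0 < k) : M k (std n) = 1 := by
  unfold M
  rw [← sum_product', sum_eq_single (⟨0, 1⟩ : (Fin n → ℕ) × Equiv.Perm (Fin n))]
  · unfold P
    refine prod_eq_one fun j hj => ?_
    have := mem_range.1 hj
    simp [std, this, path]
  · rintro ⟨v, τ⟩ _ hne
    by_contra hP
    apply hne
    simp only [P] at hP
    rw [← ne_eq, prod_ne_zero_iff] at hP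
    have h1 : ∀ j : Fin n, v j = 0 ∧ (τ j : ℕ) = j := by
      intro j
      have := hP j (mem_range.2 j.2)
      simp only [std, j.2, path] at this
      by_contra hcon
      apply this
      simp
      have : v j ≠ 0 ∨ (τ j : ℕ) ≠ j := by tauto
      rcases this with h | h
      · simp [h]; decide
      · by_cases h2 : (τ j : ℕ) < j
        · have h3 : ¬ j < τ j := by intro h5; have : (j : ℕ) < τ j := h5; omega
          have h4 : ¬ j ≤ τ j := by intro h5; have : (j : ℕ) ≤ τ j := h5; omega
          simp [h3, h4]; decide
        · have h3 : j < τ j := by have : (j : ℕ) < τ j := by omega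
                                  exact this
          have h4 : j ≤ τ j := h3.le
          simp [h3, h4]
          exact CharTwo.add_self_eq_zero _
    ext j
    · simp [(h1 j).1]
    · simp [(h1 j).2]
  · intro h
    exfalso; apply h
    simp [mem_box, hk]

lemma BC_std {n k : ℕ} (hk : 0 < k) : BC k (std n) := by
  intro r x
  refine ⟨fun h => ?_, fun h => ?_⟩
  · simp [std, h]
  · simp [std, h]; omega

lemma M_eq_one {N k : ℕ} (hk : 0 < k) (L : ℕ → (Fin (N+1) → ℕ) → ZMod 2) (hL : BC k L) :
    M k L = 1 := by
  have key : ∀ s ≤ N+1, M k (fun j => if j < s then std (N+1) j else L j) = M k L := by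
    intro s
    induction s with
    | zero => intro _; simp
    | succ s ih =>
      intro hs
      rw [← ih (by omega)]
      have hBC : ∀ s, BC k (fun j => if j < s then std (N+1) j else L j) := by
        intro s r x
        simp only
        split_ifs
        · exact BC_std hk r x
        · exact hL r x
      have e : (fun j => if j < s+1 then std (N+1) j else L j) =
        Function.update (fun j => if j < s then std (N+1) j else L j) s (std (N+1) s) := by
        funext j
        rcases eq_or_ne j s with h | h
        · subst h; simp
        · rw [Function.update_of_ne h]
          have : j < s+1 ↔ j < s := by omega
          simp only [this]
      rw [e]
      refine M_update _ (hBC s) s (by omega) _ ?_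
      rw [← e]; exact hBC (s+1)
  rw [← key (N+1) le_rfl, ← M_std (n := N+1) hk]
  unfold M P
  refine sum_congr rfl fun v _ => sum_congr rfl fun τ _ => prod_congr rfl fun j hj => ?_
  simp only [if_pos (mem_range.1 hj)]

/-- Strong cubical Sperner lemma. -/
lemma sperner {N k : ℕ} (hk : 0 < k) (L : ℕ → (Fin (N+1) → ℕ) → ZMod 2) (hL : BC k L) :
    ∃ v τ, (∀ j : Fin (N+1), v j < k) ∧
      ∀ j < N+1, L j (path v τ (j+1)) ≠ L j (path v τ j) := by
  have h := M_eq_one hk L hL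
  have h1 : M k L ≠ 0 := by rw [h]; decide
  obtain ⟨v, hv, h2⟩ := exists_ne_zero_of_sum_ne_zero h1
  obtain ⟨τ, _, h3⟩ := exists_ne_zero_of_sum_ne_zero h2
  refine ⟨v, τ, mem_box.1 hv, fun j hj he => ?_⟩
  have := (prod_ne_zero_iff.1 h3) j (mem_range.2 hj)
  apply this
  rw [he]; exact CharTwo.add_self_eq_zero _

end Cub

theorem cube_cover (U V : ℕ → Set (ℕ → unitInterval)) (hU : ∀ i, IsOpen (U i))
    (hV : ∀ i, IsOpen (V i)) (hd : ∀ i, Disjoint (U i) (V i))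
    (hU1 : ∀ i, ∀ z ∈ U i, z i ≠ 1) (hV0 : ∀ i, ∀ z ∈ V i, z i ≠ 0) :
    ∃ z, ∀ i, z ∉ U i ∧ z ∉ V i := by
  classical
  by_contra hcon
  push Not at hcon
  obtain ⟨t, ht⟩ := (isCompact_univ : IsCompact (univ : Set (ℕ → unitInterval))).elim_finite_subcover
    (fun i => U i ∪ V i) (fun i => (hU i).union (hV i)) (by
      intro z _
      obtain ⟨i, hi⟩ := hcon z
      refine mem_iUnion.2 ⟨i, ?_⟩
      by_cases h : z ∈ U i
      · exact Or.inl h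
      · exact Or.inr (hi h))
  set N := t.sup id with hN
  have hcov : ∀ z : ℕ → unitInterval, ∃ i : Fin (N+1), z ∈ U i ∨ z ∈ V i := by
    intro z
    have := ht (mem_univ z)
    simp only [mem_iUnion] at this
    obtain ⟨i, hi, hz⟩ := this
    have : i ≤ N := Finset.le_sup (f := id) hi
    exact ⟨⟨i, by omega⟩, hz⟩
  let emb : (Fin (N+1) → unitInterval) → (ℕ → unitInterval) :=
    fun w i => if h : i < N+1 then w ⟨i, h⟩ else 0
  have hemb : Continuous emb := by
    refine continuous_pi fun i => ?_
    by_cases h : i < N+1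
    · simp only [emb, h, dif_pos]; fun_prop
    · simp only [emb, h, dif_neg, not_false_eq_true]; fun_prop
  have hembr : ∀ (w : Fin (N+1) → unitInterval) (r : Fin (N+1)), emb w r = w r := by
    intro w r; simp only [emb, r.2, dif_pos]
  obtain ⟨δ, hδ, hleb⟩ := lebesgue_number_lemma_of_metric
    (s := (univ : Set (Fin (N+1) → unitInterval)))
    (c := fun ib : Fin (N+1) × Bool => emb ⁻¹' (if ib.2 then U ib.1 else V ib.1))
    isCompact_univ (by
      rintro ⟨i, b⟩
      apply IsOpen.preimage hemb
      cases b <;> simp [hU, hV]) (by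
      intro w _
      obtain ⟨i, hi | hi⟩ := hcov (emb w)
      · exact mem_iUnion.2 ⟨(i, true), by simpa using hi⟩
      · exact mem_iUnion.2 ⟨(i, false), by simpa using hi⟩)
  obtain ⟨n, hn⟩ := exists_nat_one_div_lt hδ
  set k := n + 1 with hk
  have hkpos : (0 : ℝ) < k := by positivity
  have hn' : (1 : ℝ) / k < δ := by rw [hk]; push_cast; exact hn
  let gp : (Fin (N+1) → ℕ) → (Fin (N+1) → unitInterval) :=
    fun x j => projIcc (0:ℝ) 1 zero_le_one ((x j : ℝ) / k)
  have hgp0 : ∀ x r, x r = 0 → gp x r = 0 := by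
    intro x r h; simp only [gp, h]; simp
  have hgp1 : ∀ x r, x r = k → gp x r = 1 := by
    intro x r h; simp only [gp, h]; rw [div_self hkpos.ne']; exact projIcc_right _
  let L : ℕ → (Fin (N+1) → ℕ) → ZMod 2 := fun j x =>
    if emb (gp x) ∈ V j ∨ emb (gp x) j = 1 then 1 else 0
  have hBC : Cub.BC k L := by
    intro r x
    refine ⟨fun h => ?_, fun h => ?_⟩
    · have h0 : emb (gp x) r = 0 := by rw [hembr, hgp0 _ _ h]
      have h1 : emb (gp x) ∉ V r := fun h => hV0 _ _ h h0
      simp [L, h0, h1]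
    · have h0 : emb (gp x) r = 1 := by rw [hembr, hgp1 _ _ h]
      simp [L, h0]
  obtain ⟨v, τ, hv, hne⟩ := Cub.sperner (by omega) L hBC
  obtain ⟨⟨i, b⟩, hib⟩ := hleb (gp v) (mem_univ _)
  have hball : ∀ m, gp (Cub.path v τ m) ∈ Metric.ball (gp v) δ := by
    intro m
    rw [Metric.mem_ball]
    refine lt_of_le_of_lt ?_ hn'
    refine (dist_pi_le_iff (by positivity)).2 fun j => ?_
    refine ((LipschitzWith.projIcc (zero_le_one (α := ℝ))).dist_le_mul _ _).trans ?_
    simp only [NNReal.coe_one, one_mul, Cub.path, Real.dist_eq]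
    rw [← sub_div, abs_div, abs_of_pos hkpos]
    gcongr
    split_ifs <;> simp
  apply hne i i.2
  have h1 := hib (hball (i+1))
  have h2 := hib (hball i)
  cases b
  · simp at h1 h2
    simp [L, h1, h2]
  · simp at h1 h2
    have e1 := (hd i).notMem_of_mem_left h1
    have e2 := (hd i).notMem_of_mem_left h2
    have e3 := hU1 _ _ h1
    have e4 := hU1 _ _ h2
    simp [L, e1, e2, e3, e4]

lemma exists_phi (x y : EllTwo) (hxy : x ≠ y) :
    ∃ φ : (ℕ → unitInterval) → EllTwo, Continuous φ ∧ (∀ z, z 0 = 0 → φ z = x) ∧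
      (∀ z, z 0 = 1 → φ z = y) ∧
      ∀ z z', φ z = φ z' → φ z ≠ x → φ z ≠ y → ∀ n, z (n+1) = z' (n+1) := by
  obtain ⟨k, hk⟩ : ∃ k, y k - x k ≠ 0 := by
    by_contra h
    push Not at h
    exact hxy (by ext k; linarith [h k])
  let f : ℕ → (ℕ → unitInterval) → EllTwo := fun n z =>
    lp.single 2 (k+n+1) ((1/2 : ℝ)^n * (z (n+1) : ℝ))
  have hbound : ∀ n z, ‖f n z‖ ≤ (1/2 : ℝ)^n := by
    intro n z
    simp only [f]
    rw [lp.norm_single (by norm_num), norm_mul]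
    have h1 : ‖((z (n+1) : unitInterval) : ℝ)‖ ≤ 1 := by
      rw [Real.norm_eq_abs, abs_of_nonneg (z (n+1)).2.1]; exact (z (n+1)).2.2
    have h2 : ‖(1/2 : ℝ)^n‖ = (1/2 : ℝ)^n := by
      rw [Real.norm_eq_abs, abs_of_nonneg (by positivity)]
    rw [h2]
    exact mul_le_of_le_one_right (by positivity) h1
  have hsum : Summable (fun n : ℕ => (1/2 : ℝ)^n) := summable_geometric_two
  let w : (ℕ → unitInterval) → EllTwo := fun z => ∑' n, f n z
  have hwc : Continuous w := by
    refine continuous_tsum (fun n => ?_) hsum hbound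
    exact (lp.isometry_single (E := fun _ : ℕ => ℝ) (p := 2) (k+n+1)).continuous.comp (by fun_prop)
  have hw : ∀ z j, (w z) j = ∑' n, (f n z) j := by
    intro z j
    have hs : Summable (fun n => f n z) := Summable.of_norm_bounded hsum (fun n => hbound n z)
    exact (lp.evalCLM ℝ (fun _ : ℕ => ℝ) 2 j).map_tsum hs
  have hwk : ∀ z, (w z) k = 0 := by
    intro z
    rw [hw]
    have : ∀ n, (f n z) k = 0 := by
      intro n
      exact lp.single_apply_ne _ _ _ (by omega)
    simp [this]
  have hwn : ∀ z m, (w z) (k+m+1) = (1/2 : ℝ)^m * (z (m+1) : ℝ) := by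
    intro z m
    rw [hw, tsum_eq_single m]
    · exact lp.single_apply_self _ _ _
    · intro n hn
      exact lp.single_apply_ne _ _ _ (by omega)
  let φ : (ℕ → unitInterval) → EllTwo := fun z =>
    x + (z 0 : ℝ) • (y - x) + ((z 0 : ℝ) * (1 - (z 0 : ℝ))) • w z
  have hφ : ∀ z j, (φ z) j = x j + (z 0 : ℝ) * (y j - x j) + ((z 0 : ℝ) * (1 - (z 0 : ℝ))) * (w z) j := by
    intro z j; rfl
  have h0 : ∀ z, z 0 = 0 → φ z = x := by
    intro z hz; simp [φ, hz]
  have h1 : ∀ z, z 0 = 1 → φ z = y := by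
    intro z hz; simp [φ, hz]
  refine ⟨φ, by fun_prop, h0, h1, ?_⟩
  intro z z' he hx hy n
  have e0 : (z 0 : ℝ) = z' 0 := by
    have := congrArg (fun u : EllTwo => u k) he
    simp only [hφ, hwk] at this
    have : ((z 0 : ℝ) - z' 0) * (y k - x k) = 0 := by linarith
    rcases mul_eq_zero.1 this with h | h
    · linarith
    · exact absurd h hk
  have hz0 : (z 0 : ℝ) ≠ 0 := fun h => hx (h0 z (Subtype.ext h))
  have hz1 : (1 - z 0 : ℝ) ≠ 0 := fun h => hy (h1 z (Subtype.ext (sub_eq_zero.1 h).symm))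
  have := congrArg (fun u : EllTwo => u (k+n+1)) he
  simp only [hφ, hwn, ← e0] at this
  have h2 := add_left_cancel this
  have h3 := mul_left_cancel₀ (mul_ne_zero hz0 hz1) h2
  have h4 := mul_left_cancel₀ (by positivity : (1/2 : ℝ)^n ≠ 0) h3
  exact Subtype.ext h4

lemma exists_sep (S : Set EllTwo) (φ : (ℕ → unitInterval) → EllTwo) (hφ : Continuous φ)
    (U V : Set EllTwo) (hU : IsOpen U) (hV : IsOpen V) (hd : ∀ s ∈ S, s ∈ U → s ∈ V → False) (m : ℕ)
    (hA : ∀ z, φ z ∈ S → (z m : ℝ) ≤ 1/4 → φ z ∈ U)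
    (hB : ∀ z, φ z ∈ S → 3/4 ≤ (z m : ℝ) → φ z ∈ V) :
    ∃ U' V' : Set (ℕ → unitInterval), IsOpen U' ∧ IsOpen V' ∧ Disjoint U' V' ∧
      (∀ z, z m = 0 → z ∈ U') ∧ (∀ z, z m = 1 → z ∈ V') ∧
      (∀ z, φ z ∈ S → φ z ∈ U → z ∈ U') ∧ (∀ z, φ z ∈ S → φ z ∈ V → z ∈ V') := by
  have hm : Continuous (fun z : ℕ → unitInterval => (z m : ℝ)) := by fun_prop
  have h1 : Disjoint (closure ({z | φ z ∈ S ∧ φ z ∈ U} ∪ {z | z m = 0}))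
      ({z | φ z ∈ S ∧ φ z ∈ V} ∪ {z | z m = 1}) := by
    rw [Set.disjoint_left]
    rintro z hz (⟨hzS, hzV⟩ | hz1)
    · have hq : 1/4 < (z m : ℝ) := by
        by_contra h
        exact hd _ hzS (hA z hzS (not_lt.1 h)) hzV
      obtain ⟨z', ⟨h1, h2⟩, h3 | h3⟩ := mem_closure_iff.1 hz _
        ((hV.preimage hφ).inter (isOpen_lt continuous_const hm)) ⟨hzV, hq⟩
      · exact hd _ h3.1 h3.2 h1
      · simp only [mem_ofPred_eq] at h2 h3; rw [h3] at h2; norm_num at h2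
    · have hq : 3/4 < (z m : ℝ) := by
        simp only [mem_ofPred_eq] at hz1; rw [hz1]; norm_num
      obtain ⟨z', h2, h3 | h3⟩ := mem_closure_iff.1 hz _
        (isOpen_lt continuous_const hm) hq
      · exact hd _ h3.1 h3.2 (hB _ h3.1 (le_of_lt h2))
      · simp only [mem_ofPred_eq] at h2 h3; rw [h3] at h2; norm_num at h2
  have h2 : Disjoint ({z | φ z ∈ S ∧ φ z ∈ U} ∪ {z | z m = 0})
      (closure ({z | φ z ∈ S ∧ φ z ∈ V} ∪ {z | z m = 1})) := by
    rw [Set.disjoint_left]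
    rintro z (⟨hzS, hzV⟩ | hz1) hz
    · have hq : (z m : ℝ) < 3/4 := by
        by_contra h
        exact hd _ hzS hzV (hB z hzS (not_lt.1 h))
      obtain ⟨z', ⟨h1, h2⟩, h3 | h3⟩ := mem_closure_iff.1 hz _
        ((hU.preimage hφ).inter (isOpen_lt hm continuous_const)) ⟨hzV, hq⟩
      · exact hd _ h3.1 h1 h3.2
      · simp only [mem_ofPred_eq] at h2 h3; rw [h3] at h2; norm_num at h2
    · have hq : (z m : ℝ) < 1/4 := by
        simp only [mem_ofPred_eq] at hz1; rw [hz1]; norm_num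
      obtain ⟨z', h2, h3 | h3⟩ := mem_closure_iff.1 hz _
        (isOpen_lt hm continuous_const) hq
      · exact hd _ h3.1 (hA _ h3.1 (le_of_lt h2)) h3.2
      · simp only [mem_ofPred_eq] at h2 h3; rw [h3] at h2; norm_num at h2
  obtain ⟨U', V', a, b, c, d, e⟩ := separatedNhds_iff_disjoint.2 (completely_normal h1 h2)
  exact ⟨U', V', a, b, e, fun z hz => c (Or.inr hz), fun z hz => d (Or.inr hz),
    fun z h h' => c (Or.inl ⟨h, h'⟩), fun z h h' => d (Or.inl ⟨h, h'⟩)⟩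

lemma exists_separators (S : Set EllTwo) (hS : ¬ StronglyInfiniteDimensional S)
    (φ : (ℕ → unitInterval) → EllTwo) (hφ : Continuous φ)
    (hinj : ∀ z z', φ z = φ z' → φ z ∈ S → ∀ n, z (n+1) = z' (n+1)) :
    ∃ U V : ℕ → Set EllTwo, (∀ n, IsOpen (U n)) ∧ (∀ n, IsOpen (V n)) ∧
      (∀ n, ∀ s ∈ S, s ∈ U n → s ∈ V n → False) ∧
      (∀ n z, φ z ∈ S → (z (n+1) : ℝ) ≤ 1/4 → φ z ∈ U n) ∧
      (∀ n z, φ z ∈ S → 3/4 ≤ (z (n+1) : ℝ) → φ z ∈ V n) ∧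
      ∀ s ∈ S, ∃ n, s ∈ U n ∨ s ∈ V n := by
  let A : ℕ → Set S := fun n => (↑) ⁻¹' (φ '' {z | (z (n+1) : ℝ) ≤ 1/4})
  let B : ℕ → Set S := fun n => (↑) ⁻¹' (φ '' {z | 3/4 ≤ (z (n+1) : ℝ)})
  have hc : ∀ n, Continuous (fun z : ℕ → unitInterval => (z (n+1) : ℝ)) := fun n => by fun_prop
  have hA : ∀ n, IsClosed (A n) := fun n =>
    (((isClosed_le (hc n) continuous_const).isCompact).image hφ).isClosed.preimage continuous_subtype_val
  have hB : ∀ n, IsClosed (B n) := fun n =>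
    (((isClosed_le continuous_const (hc n)).isCompact).image hφ).isClosed.preimage continuous_subtype_val
  have hAB : ∀ n, Disjoint (A n) (B n) := by
    intro n
    rw [Set.disjoint_left]
    rintro ⟨s, hs⟩ ⟨z, hz, rfl⟩ ⟨z', hz', he⟩
    simp only at he
    have := hinj z z' he.symm hs n
    simp only [mem_ofPred_eq] at hz hz'
    rw [this] at hz; linarith
  have hess : ¬ IsEssentialFamily A B := fun h => hS ⟨A, B, fun n => ⟨hA n, hB n, hAB n⟩, h⟩
  unfold IsEssentialFamily at hess
  push Not at hess
  obtain ⟨L, hL, hLe⟩ := hess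
  choose hLc U V hU hV hd hAU hBV hc using hL
  choose U' hU' hUU using fun n => isOpen_induced_iff.1 (hU n)
  choose V' hV' hVV using fun n => isOpen_induced_iff.1 (hV n)
  have mU : ∀ n (s : S), (s : EllTwo) ∈ U' n ↔ s ∈ U n := fun n s => by rw [← hUU n]; rfl
  have mV : ∀ n (s : S), (s : EllTwo) ∈ V' n ↔ s ∈ V n := fun n s => by rw [← hVV n]; rfl
  refine ⟨U', V', hU', hV', ?_, ?_, ?_, ?_⟩
  · intro n s hs h1 h2
    exact (Set.disjoint_left.1 (hd n)) ((mU n ⟨s, hs⟩).1 h1) ((mV n ⟨s, hs⟩).1 h2)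
  · intro n z hz h
    exact (mU n ⟨_, hz⟩).2 (hAU n ⟨z, h, rfl⟩)
  · intro n z hz h
    exact (mV n ⟨_, hz⟩).2 (hBV n ⟨z, h, rfl⟩)
  · intro s hs
    have : (⟨s, hs⟩ : S) ∉ ⋂ i, L i := by rw [hLe]; exact notMem_empty _
    rw [mem_iInter] at this
    push Not at this
    obtain ⟨n, hn⟩ := this
    have h2 : (⟨s, hs⟩ : S) ∈ (L n)ᶜ := hn
    rw [hc n] at h2
    exact ⟨n, h2.imp (mU n ⟨s, hs⟩).2 (mV n ⟨s, hs⟩).2⟩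

/-- If `S ⊆ ℓ²` is weakly infinite dimensional, then `ℓ² \ S` is continuum
connected: any two of its points lie in a compact connected subset of `ℓ² \ S`. -/
theorem continuumConnected_compl_of_weaklyInfiniteDimensional_ellTwo
    (S : Set EllTwo) (hS : ¬ StronglyInfiniteDimensional S) :
    ∀ x ∈ Sᶜ, ∀ y ∈ Sᶜ, ∃ C : Set EllTwo,
      C ⊆ Sᶜ ∧ IsCompact C ∧ IsConnected C ∧ x ∈ C ∧ y ∈ C := by
  intro x hx y hy
  rcases eq_or_ne x y with rfl | hxy
  · exact ⟨{x}, by simpa using hx, isCompact_singleton, isConnected_singleton, rfl, rfl⟩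
  obtain ⟨φ, hφ, h0, h1, hinj⟩ := exists_phi x y hxy
  obtain ⟨U, V, hU, hV, hd, hA, hB, hcov⟩ := exists_separators S hS φ hφ
    (fun z z' h hz => hinj z z' h (fun e => hx (e ▸ hz)) (fun e => hy (e ▸ hz)))
  choose U' V' hU' hV' hd' hf0 hf1 hUU hVV using fun n =>
    exists_sep S φ hφ (U n) (V n) (hU n) (hV n) (hd n) (n+1) (hA n) (hB n)
  let K : Set (ℕ → unitInterval) := ⋂ n, (U' n ∪ V' n)ᶜ
  have hK : IsCompact K :=
    (isClosed_iInter fun n => ((hU' n).union (hV' n)).isClosed_compl).isCompact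
  let D : Set EllTwo := φ '' K ∪ {x, y}
  have hD : IsCompact D := (hK.image hφ).union (by simp)
  have hDS : D ⊆ Sᶜ := by
    rintro _ (⟨z, hz, rfl⟩ | rfl | rfl)
    · intro hzS
      obtain ⟨n, hn⟩ := hcov _ hzS
      exact (mem_iInter.1 hz n) (hn.imp (hUU n z hzS) (hVV n z hzS))
    · exact hx
    · exact hy
  have hxD : x ∈ D := Or.inr (Or.inl rfl)
  have hyD : y ∈ D := Or.inr (Or.inr rfl)
  have : CompactSpace D := isCompact_iff_compactSpace.1 hD
  let x' : D := ⟨x, hxD⟩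
  let y' : D := ⟨y, hyD⟩
  suffices hmem : y' ∈ connectedComponent x' by
    refine ⟨(↑) '' (connectedComponent x'), ?_, ?_, ?_, ?_, ?_⟩
    · rintro _ ⟨d, _, rfl⟩; exact hDS d.2
    · exact isClosed_connectedComponent.isCompact.image continuous_subtype_val
    · exact isConnected_connectedComponent.image _ continuous_subtype_val.continuousOn
    · exact ⟨x', mem_connectedComponent, rfl⟩
    · exact ⟨y', hmem, rfl⟩
  by_contra hmem
  rw [connectedComponent_eq_iInter_isClopen, mem_iInter] at hmem
  push Not at hmem
  obtain ⟨⟨P, hP, hxP⟩, hyP⟩ := hmem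
  simp only at hyP
  have hc1 : IsCompact ((↑) '' P : Set EllTwo) := hP.isClosed.isCompact.image continuous_subtype_val
  have hc2 : IsCompact ((↑) '' Pᶜ : Set EllTwo) :=
    hP.compl.isClosed.isCompact.image continuous_subtype_val
  have hdis : Disjoint ((↑) '' P : Set EllTwo) ((↑) '' Pᶜ) :=
    (Set.disjoint_image_iff Subtype.val_injective).2 disjoint_compl_right
  obtain ⟨U0, V0, hU0, hV0, hPU, hPV, hUV0⟩ := SeparatedNhds.of_isCompact_isCompact hc1 hc2 hdis
  have hxU : x ∈ U0 := hPU ⟨x', hxP, rfl⟩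
  have hyV : y ∈ V0 := hPV ⟨y', hyP, rfl⟩
  obtain ⟨z, hz⟩ := cube_cover
    (fun i => Nat.casesOn i (φ ⁻¹' U0) U') (fun i => Nat.casesOn i (φ ⁻¹' V0) V')
    (by rintro (_ | n); exacts [hU0.preimage hφ, hU' n])
    (by rintro (_ | n); exacts [hV0.preimage hφ, hV' n])
    (by rintro (_ | n); exacts [hUV0.preimage φ, hd' n])
    (by
      rintro (_ | n) z hz h
      · have hz' : φ z ∈ U0 := hz
        rw [h1 z h] at hz'
        exact Set.disjoint_left.1 hUV0 hz' hyV
      · exact Set.disjoint_left.1 (hd' n) hz (hf1 n z h))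
    (by
      rintro (_ | n) z hz h
      · have hz' : φ z ∈ V0 := hz
        rw [h0 z h] at hz'
        exact Set.disjoint_left.1 hUV0 hxU hz'
      · exact Set.disjoint_left.1 (hd' n) (hf0 n z h) hz)
  have hzK : z ∈ K := mem_iInter.2 fun n h =>
    h.elim (hz (n+1)).1 (hz (n+1)).2
  have hzD : φ z ∈ D := Or.inl ⟨z, hzK, rfl⟩
  by_cases hzP : (⟨φ z, hzD⟩ : D) ∈ P
  · exact (hz 0).1 (hPU ⟨_, hzP, rfl⟩)
  · exact (hz 0).2 (hPV ⟨_, hzP, rfl⟩)
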